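/- For every tour σ on {1,…,r} with incidence vector x and positions u, the 2PATH inequality u_i − u_k + (2r−3)·x_{ik} + (r−4)·x_{ki} + (r−1)(x_{ij} + x_{jk}) ≤ 2r − 4 holds for all pairwise distinct i, j, k ∈ {2,…,r}. -/

import Mathlib

/-- A tour on the node set `Fin r`: a permutation consisting of a single cycle
through all `r` nodes. -/
def IsTour {r : ℕ} (σ : Equiv.Perm (Fin r)) : Prop :=
  σ.IsCycle ∧ ∀ i, σ i ≠ i

/-- The incidence vector of a tour `σ`: `x i j = 1` iff `j = σ i`. -/
def incidence {r : ℕ} (σ : Equiv.Perm (Fin r)) (i j : Fin r) : ℝ :=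
  if σ i = j then 1 else 0

/-- `u` gives the positions of the nodes along the tour `σ`: `u i` is the
(unique) integer in `{1, …, r}` with `σ^(u i − 1) 1 = i` (node `1` is index `0`). -/
def IsPositions {r : ℕ} [NeZero r] (σ : Equiv.Perm (Fin r)) (u : Fin r → ℕ) : Prop :=
  ∀ i, 1 ≤ u i ∧ u i ≤ r ∧ (σ ^ (u i - 1)) (0 : Fin r) = i

theorem pos_step {r : ℕ} [NeZero r] (σ : Equiv.Perm (Fin r)) (u : Fin r → ℕ)
    (hu : IsPositions σ u) (a b : Fin r) (hb : b ≠ 0) (h : σ a = b) : u b = u a + 1 := by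
  have hsurj : Function.Surjective (fun m : Fin r => (σ ^ (m : ℕ)) (0 : Fin r)) := by
    intro c
    obtain ⟨h1, h2, h3⟩ := hu c
    exact ⟨⟨u c - 1, by omega⟩, h3⟩
  have hinj := Finite.injective_iff_surjective.mpr hsurj
  obtain ⟨a1, a2, a3⟩ := hu a
  obtain ⟨b1, b2, b3⟩ := hu b
  obtain ⟨m, hm⟩ : ∃ m, u b = m + 2 := by
    refine ⟨u b - 2, ?_⟩
    have : u b ≠ 1 := by
      intro h1
      rw [h1] at b3
      exact hb (by simpa using b3.symm)
    omega
  have e : (σ ^ m) (0 : Fin r) = a := by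
    apply σ.injective
    rw [h, ← b3, hm, show m + 2 - 1 = m + 1 from rfl, pow_succ', Equiv.Perm.mul_apply]
  have := @hinj ⟨m, by omega⟩ ⟨u a - 1, by omega⟩ (by simp only [e, a3])
  simp only [Fin.mk.injEq] at this
  omega

theorem pos_two_le {r : ℕ} [NeZero r] (σ : Equiv.Perm (Fin r)) (u : Fin r → ℕ)
    (hu : IsPositions σ u) (b : Fin r) (hb : b ≠ 0) : 2 ≤ u b := by
  obtain ⟨b1, b2, b3⟩ := hu b
  have : u b ≠ 1 := by
    intro h1
    rw [h1] at b3
    exact hb (by simpa using b3.symm)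
  omega

theorem two_path_valid (r : ℕ) [NeZero r] (hr : 4 ≤ r)
    (σ : Equiv.Perm (Fin r)) (hσ : IsTour σ)
    (u : Fin r → ℕ) (hu : IsPositions σ u)
    (i j k : Fin r) (hi : i ≠ 0) (hj : j ≠ 0) (hk : k ≠ 0)
    (hij : i ≠ j) (hik : i ≠ k) (hjk : j ≠ k) :
    (u i : ℝ) - (u k : ℝ) + (2 * (r : ℝ) - 3) * incidence σ i k
      + ((r : ℝ) - 4) * incidence σ k i
      + ((r : ℝ) - 1) * (incidence σ i j + incidence σ j k)
      ≤ 2 * (r : ℝ) - 4 := by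
  have hi2 := pos_two_le σ u hu i hi
  have hj2 := pos_two_le σ u hu j hj
  have hk2 := pos_two_le σ u hu k hk
  have hir := (hu i).2.1
  have hjr := (hu j).2.1
  have hkr := (hu k).2.1
  have s1 := pos_step σ u hu i k hk
  have s2 := pos_step σ u hu k i hi
  have s3 := pos_step σ u hu i j hj
  have s4 := pos_step σ u hu j k hk
  have n1 : σ i = k → σ i ≠ j := fun h h' => hjk (h'.symm.trans h)
  have n2 : σ i = k → σ j ≠ k := fun h h' => hij (σ.injective (h.trans h'.symm))
  have key : (u i : ℤ) - (u k : ℤ) + (2 * (r : ℤ) - 3) * (if σ i = k then 1 else 0)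
      + ((r : ℤ) - 4) * (if σ k = i then 1 else 0)
      + ((r : ℤ) - 1) * ((if σ i = j then 1 else 0) + (if σ j = k then 1 else 0))
      ≤ 2 * (r : ℤ) - 4 := by
    clear hu hσ
    split_ifs <;> grind
  unfold incidence
  exact_mod_cast key
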